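/- Let G be a P4-sparse graph and let A be a set of four vertices inducing a P4 in G. Then there do not exist a vertex v in T(A) ∪ P(A) and distinct vertices x, y in I(A) such that the edges of G among {v, x, y} are exactly vy and xy. -/

import Mathlib

open SimpleGraph

variable {V : Type*}

/-- `a, b, c, d` form an induced path on four vertices (a `P4`) in `G`. -/
def IsP4 (G : SimpleGraph V) (a b c d : V) : Prop :=
  a ≠ b ∧ a ≠ c ∧ a ≠ d ∧ b ≠ c ∧ b ≠ d ∧ c ≠ d ∧
    G.Adj a b ∧ G.Adj b c ∧ G.Adj c d ∧ ¬G.Adj a c ∧ ¬G.Adj a d ∧ ¬G.Adj b d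

/-- A graph is a cograph if it contains no induced `P4`. -/
def IsCograph (G : SimpleGraph V) : Prop :=
  ∀ a b c d : V, ¬IsP4 G a b c d

/-- The vertex set `A` induces a `P4` in `G`. -/
def InducesP4 (G : SimpleGraph V) (A : Set V) : Prop :=
  ∃ a b c d : V, IsP4 G a b c d ∧ A = {a, b, c, d}

/-- `G` is `P4`-sparse: every set of five vertices induces at most one `P4`. -/
def P4Sparse (G : SimpleGraph V) : Prop :=
  ∀ s : Set V, s.ncard = 5 →
    ∀ A B : Set V, A ⊆ s → B ⊆ s → InducesP4 G A → InducesP4 G B → A = B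

/-- `F` is a deletion set of `G`: a set of edges of `G` whose removal yields a cograph. -/
def IsDeletionSet (G : SimpleGraph V) (F : Set (Sym2 V)) : Prop :=
  F ⊆ G.edgeSet ∧ IsCograph (G.deleteEdges F)

/-- The minimum size of a deletion set of `G`. -/
noncomputable def cographAlpha (G : SimpleGraph V) : ℕ :=
  sInf {n | ∃ F : Set (Sym2 V), IsDeletionSet G F ∧ F.ncard = n}

/-- `T(A)`: the vertices outside `A` adjacent to all vertices of `A`. -/
def tSet (G : SimpleGraph V) (A : Set V) : Set V :=
  {v | v ∉ A ∧ ∀ a ∈ A, G.Adj v a}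

/-- `I(A)`: the vertices outside `A` adjacent to no vertex of `A`. -/
def iSet (G : SimpleGraph V) (A : Set V) : Set V :=
  {v | v ∉ A ∧ ∀ a ∈ A, ¬G.Adj v a}

/-- `P(A)`: the vertices `v` outside `A` with `1 ≤ |N(v) ∩ A| ≤ 3`. -/
def pSet (G : SimpleGraph V) (A : Set V) : Set V :=
  {v | v ∉ A ∧ 1 ≤ (G.neighborSet v ∩ A).ncard ∧ (G.neighborSet v ∩ A).ncard ≤ 3}

/-!
In any graph, a vertex `v` whose only neighbour in an induced `P4` is `p` starts another induced
`P4` of the form `v p q r` with `q`, `r` on the first one. If `v` lies outside the first one,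
then these are two `P4`s on five vertices. So in a `P4`-sparse graph every vertex `v` of
`T(A) ∪ P(A)` has two distinct neighbours `p`, `q` in `A`, and then `x y v p` and `x y v q` would be
distinct induced `P4`s on the five vertices `x, y, v, p, q`.
-/

section

variable {G : SimpleGraph V} {A B : Set V} {a b c d e p v : V}

theorem isP4_iff : IsP4 G a b c d ↔
    G.Adj a b ∧ G.Adj b c ∧ G.Adj c d ∧ ¬G.Adj a c ∧ ¬G.Adj a d ∧ ¬G.Adj b d := by
  refine ⟨fun ⟨_, _, _, _, _, _, h⟩ => h, fun h => ?_⟩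
  obtain ⟨hab, hbc, hcd, -, had, hbd⟩ := id h
  have hac_ne : a ≠ c := fun heq => had (heq ▸ hcd)
  have had_ne : a ≠ d := fun heq => hbd (heq ▸ hab.symm)
  have hbd_ne : b ≠ d := fun heq => had (heq ▸ hab)
  exact ⟨hab.ne, hac_ne, had_ne, hbc.ne, hbd_ne, hcd.ne, h⟩

theorem IsP4.reverse (h : IsP4 G a b c d) : IsP4 G d c b a := by
  obtain ⟨hab, hbc, hcd, hac, had, hbd⟩ := isP4_iff.1 h
  exact isP4_iff.2 ⟨hcd.symm, hbc.symm, hab.symm, mt Adj.symm hbd, mt Adj.symm had, mt Adj.symm hac⟩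

theorem InducesP4.ncard_eq_four (hA : InducesP4 G A) : A.ncard = 4 := by
  obtain ⟨a, b, c, d, ⟨hab, hac, had, hbc, hbd, hcd, -⟩, rfl⟩ := hA
  exact Set.ncard_eq_four.2 ⟨a, b, c, d, hab, hac, had, hbc, hbd, hcd, rfl⟩

theorem IsP4.exists_isP4_of_neighborSet_inter_eq_singleton (h : IsP4 G a b c d)
    (hv : G.neighborSet v ∩ {a, b, c, d} = {p}) :
    ∃ q ∈ ({a, b, c, d} : Set V), ∃ r ∈ ({a, b, c, d} : Set V), IsP4 G v p q r := by
  have adj_iff {w : V} (hw : w ∈ ({a, b, c, d} : Set V)) : G.Adj v w ↔ w = p := by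
    simpa [hw] using Set.ext_iff.1 hv w
  have hp : p ∈ ({a, b, c, d} : Set V) := (hv.symm.subset rfl).2
  rcases hp with rfl | rfl | rfl | rfl
  · exact ⟨b, by simp, c, by simp, by grind [isP4_iff, SimpleGraph.adj_comm]⟩
  · exact ⟨c, by simp, d, by simp, by grind [isP4_iff, SimpleGraph.adj_comm]⟩
  · exact ⟨b, by simp, a, by simp, by grind [isP4_iff, SimpleGraph.adj_comm]⟩
  · exact ⟨c, by simp, b, by simp, by grind [isP4_iff, SimpleGraph.adj_comm]⟩

theorem P4Sparse.eq_of_subset_insert (hG : P4Sparse G) (hA : InducesP4 G A) (hB : InducesP4 G B)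
    (hBA : B ⊆ insert e A) : A = B := by
  have hAfin : A.Finite := Set.finite_of_ncard_ne_zero (by simp [hA.ncard_eq_four])
  by_cases he : e ∈ A
  · rw [Set.insert_eq_of_mem he] at hBA
    exact (Set.eq_of_subset_of_ncard_le hBA (hA.ncard_eq_four.trans hB.ncard_eq_four.symm).le
      hAfin).symm
  · have hcard : (insert e A).ncard = 5 := by
      rw [Set.ncard_insert_of_notMem he hAfin, hA.ncard_eq_four]
    exact hG _ hcard A B (Set.subset_insert e A) hBA hA hB

theorem P4Sparse.mem_of_isP4 (hG : P4Sparse G) (hA : InducesP4 G A) (h : IsP4 G a b c d)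
    (hb : b ∈ A) (hc : c ∈ A) (hd : d ∈ A) : a ∈ A := by
  have hsub : {a, b, c, d} ⊆ insert a A := by
    apply Set.insert_subset_insert
    simp only [Set.insert_subset_iff, Set.singleton_subset_iff]
    exact ⟨hb, hc, hd⟩
  rw [hG.eq_of_subset_insert hA ⟨a, b, c, d, h, rfl⟩ hsub]
  exact Set.mem_insert a _

theorem P4Sparse.isP4_right_unique (hG : P4Sparse G) (hd : IsP4 G a b c d)
    (he : IsP4 G a b c e) : d = e := by
  have hmem : d ∈ ({a, b, c, e} : Set V) :=
    hG.mem_of_isP4 ⟨a, b, c, e, he, rfl⟩ hd.reverse (by simp) (by simp) (by simp)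
  obtain ⟨-, -, had, -, hbd, hcd, -⟩ := hd
  simpa [had.symm, hbd.symm, hcd.symm] using hmem

theorem P4Sparse.neighborSet_inter_ne_singleton (hG : P4Sparse G) (hA : InducesP4 G A)
    (hv : v ∉ A) : G.neighborSet v ∩ A ≠ {p} := by
  intro hN
  have hp : p ∈ A := (hN.symm.subset rfl).2
  obtain ⟨a, b, c, d, h, rfl⟩ := id hA
  obtain ⟨q, hq, r, hr, hvpqr⟩ := h.exists_isP4_of_neighborSet_inter_eq_singleton hN
  exact hv (hG.mem_of_isP4 hA hvpqr hp hq hr)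

theorem notMem_of_mem_tSet_union_pSet (hv : v ∈ tSet G A ∪ pSet G A) : v ∉ A :=
  hv.elim And.left And.left

theorem neighborSet_inter_nonempty_of_mem_tSet_union_pSet (hA : A.Nonempty)
    (hv : v ∈ tSet G A ∪ pSet G A) : (G.neighborSet v ∩ A).Nonempty := by
  rcases hv with ⟨-, hadj⟩ | ⟨-, hpos, -⟩
  · exact hA.imp fun a ha => ⟨hadj a ha, ha⟩
  · exact Set.nonempty_of_ncard_ne_zero (Nat.one_le_iff_ne_zero.1 hpos)

theorem P4Sparse.neighborSet_inter_nontrivial (hG : P4Sparse G) (hA : InducesP4 G A)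
    (hv : v ∈ tSet G A ∪ pSet G A) : (G.neighborSet v ∩ A).Nontrivial := by
  have hAne : A.Nonempty := Set.nonempty_of_ncard_ne_zero (by simp [hA.ncard_eq_four])
  obtain ⟨p, hp⟩ | hN :=
    (neighborSet_inter_nonempty_of_mem_tSet_union_pSet hAne hv).exists_eq_singleton_or_nontrivial
  · exact absurd hp (hG.neighborSet_inter_ne_singleton hA (notMem_of_mem_tSet_union_pSet hv))
  · exact hN

end

/-- **Observation 2.4, complement form.** If `G` is `P4`-sparse and `A`
induces a `P4`, then there are no `v ∈ T(A) ∪ P(A)` and distinct `x, y ∈ I(A)` such that the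
edges of `G` among `{v, x, y}` are exactly `vy` and `xy`. -/
theorem p4Sparse_obs_2_4_compl (G : SimpleGraph V) (hG : P4Sparse G)
    (a b c d : V) (hP4 : IsP4 G a b c d) (A : Set V) (hA : A = {a, b, c, d}) :
    ¬∃ v x y : V, x ≠ y ∧ v ∈ tSet G A ∪ pSet G A ∧ x ∈ iSet G A ∧ y ∈ iSet G A ∧
      ¬G.Adj v x ∧ G.Adj v y ∧ G.Adj x y := by
  rintro ⟨v, x, y, -, hv, ⟨-, hx⟩, ⟨-, hy⟩, hvx, hvy, hxy⟩
  obtain ⟨p, hp, q, hq, hpq⟩ := hG.neighborSet_inter_nontrivial ⟨a, b, c, d, hP4, hA⟩ hv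
  have isP4_of_mem {r : V} (hr : r ∈ G.neighborSet v ∩ A) : IsP4 G x y v r :=
    isP4_iff.2 ⟨hxy, hvy.symm, hr.1, mt Adj.symm hvx, hx r hr.2, hy r hr.2⟩
  exact hpq (hG.isP4_right_unique (isP4_of_mem hp) (isP4_of_mem hq))
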